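/- Let (π : A → B, ⊞, 0) be as in the context, and for b,b' ∈ B define the maps r(b,b')u := Σ ((ub₍₁₎)·b'₍₁₎)/(b₍₂₎b'₍₂₎), s(b,b')u := Σ (b₍₁₎·(ub'₍₁₎))/(b₍₂₎b'₍₂₎), s̄(b,b')u := Σ (b₍₁₎b'₍₁₎)\((b₍₂₎u)·b'₍₂₎) and l(b,b')u := Σ (b₍₁₎b'₍₁₎)\(b₍₂₎·(b'₍₂₎u)) (elements of B acting on A through 0). Then for all x, x' ∈ F(A) and b, b' ∈ B: (x·b)·(x'·b') = Σ (r(b₍₁₎,b'₍₁₎)x · s(b₍₂₎,b'₍₂₎)x') · (b₍₃₎b'₍₃₎) and (b·x)·(b'·x') = Σ (b₍₁₎b'₍₁₎) · (s̄(b₍₂₎,b'₍₂₎)x · l(b₍₃₎,b'₍₃₎)x'). -/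

import Mathlib

open TensorProduct

namespace FormalLoops

variable (k : Type*) [Field k]

/-- A unital, not necessarily associative, bialgebra with left and right divisions:
a cocommutative coassociative counital coalgebra together with a bilinear unital
multiplication and bilinear left/right divisions which are coalgebra morphisms and
satisfy the division cancellation laws (in Sweedler form). -/
structure DivBialg (A : Type*) [AddCommGroup A] [Module k A] where
  Δ : A →ₗ[k] A ⊗[k] A
  ε : A →ₗ[k] k
  mul : A →ₗ[k] A →ₗ[k] A
  one : A
  ld : A →ₗ[k] A →ₗ[k] A
  rd : A →ₗ[k] A →ₗ[k] A
  coassoc : ∀ u : A, (TensorProduct.assoc k A A A) ((Δ.rTensor A) (Δ u)) = (Δ.lTensor A) (Δ u)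
  counit_left : ∀ u : A, (TensorProduct.lid k A) ((ε.rTensor A) (Δ u)) = u
  counit_right : ∀ u : A, (TensorProduct.rid k A) ((ε.lTensor A) (Δ u)) = u
  cocomm : ∀ u : A, (TensorProduct.comm k A A) (Δ u) = Δ u
  Δ_one : Δ one = one ⊗ₜ[k] one
  ε_one : ε one = 1
  one_mul : ∀ u, mul one u = u
  mul_one : ∀ u, mul u one = u
  Δ_mul : ∀ u v, Δ (mul u v) = TensorProduct.map₂ mul mul (Δ u) (Δ v)
  ε_mul : ∀ u v, ε (mul u v) = ε u * ε v
  Δ_ld : ∀ u v, Δ (ld u v) = TensorProduct.map₂ ld ld (Δ u) (Δ v)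
  ε_ld : ∀ u v, ε (ld u v) = ε u * ε v
  Δ_rd : ∀ u v, Δ (rd u v) = TensorProduct.map₂ rd rd (Δ u) (Δ v)
  ε_rd : ∀ u v, ε (rd u v) = ε u * ε v
  /-- Σ u₍₁₎\(u₍₂₎v) = ε(u)v -/
  ld_mul_cancel : ∀ u v, TensorProduct.lift ld ((LinearMap.lTensor A (mul.flip v)) (Δ u)) = ε u • v
  /-- Σ u₍₁₎(u₍₂₎\v) = ε(u)v -/
  mul_ld_cancel : ∀ u v, TensorProduct.lift mul ((LinearMap.lTensor A (ld.flip v)) (Δ u)) = ε u • v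
  /-- Σ (vu₍₁₎)/u₍₂₎ = ε(u)v -/
  rd_mul_cancel : ∀ u v, TensorProduct.lift rd ((LinearMap.rTensor A (mul v)) (Δ u)) = ε u • v
  /-- Σ (v/u₍₁₎)u₍₂₎ = ε(u)v -/
  mul_rd_cancel : ∀ u v, TensorProduct.lift mul ((LinearMap.rTensor A (rd v)) (Δ u)) = ε u • v

variable {A B : Type*} [AddCommGroup A] [Module k A] [AddCommGroup B] [Module k B]

/-- A morphism of unital bialgebras with divisions. -/
structure DivBialgHom (SA : DivBialg k A) (SB : DivBialg k B) (π : A →ₗ[k] B) : Prop where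
  map_Δ : ∀ u, TensorProduct.map π π (SA.Δ u) = SB.Δ (π u)
  map_ε : ∀ u, SB.ε (π u) = SA.ε u
  map_mul : ∀ u v, π (SA.mul u v) = SB.mul (π u) (π v)
  map_one : π SA.one = SB.one
  map_ld : ∀ u v, π (SA.ld u v) = SB.ld (π u) (π v)
  map_rd : ∀ u v, π (SA.rd u v) = SB.rd (π u) (π v)

/-- `D` is a subcoalgebra w.r.t. the comultiplication `Δ`: `Δ(D) ⊆ D ⊗ D`. -/
def IsSubcoalg {M : Type*} [AddCommGroup M] [Module k M] (Δ : M →ₗ[k] M ⊗[k] M)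
    (D : Submodule k M) : Prop :=
  ∀ x ∈ D, Δ x ∈ LinearMap.range (TensorProduct.map D.subtype D.subtype)

/-- `F(A)`: the sum of all subcoalgebras `D ⊆ A` on which `π = ε(·) • 1`. -/
def Fsub (SA : DivBialg k A) (oneB : B) (π : A →ₗ[k] B) : Submodule k A :=
  sSup {D : Submodule k A | IsSubcoalg k SA.Δ D ∧ ∀ x ∈ D, π x = SA.ε x • oneB}

end FormalLoops

namespace FormalLoops

variable (k : Type*) [Field k]
variable {A B : Type*} [AddCommGroup A] [Module k A] [AddCommGroup B] [Module k B]

/-- Core of the Sweedler-type operators `u ↦ Σ d(α(b₍₁₎,b'₍₁₎), β(b₍₂₎,b'₍₂₎,u))`. -/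
noncomputable def sweedCoreL (d : A →ₗ[k] A →ₗ[k] A) (α : B →ₗ[k] B →ₗ[k] A)
    (β : B →ₗ[k] B →ₗ[k] A →ₗ[k] A) :
    ((B ⊗[k] B) ⊗[k] (B ⊗[k] B)) ⊗[k] A →ₗ[k] A :=
  TensorProduct.lift d ∘ₗ
  TensorProduct.map (TensorProduct.lift α) (TensorProduct.lift (TensorProduct.lift β)) ∘ₗ
  (TensorProduct.assoc k (B ⊗[k] B) (B ⊗[k] B) A).toLinearMap ∘ₗ
  LinearMap.rTensor A (TensorProduct.tensorTensorTensorComm k B B B B).toLinearMap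

/-- Core of the Sweedler-type operators `u ↦ Σ d(β(b₍₁₎,b'₍₁₎,u), α(b₍₂₎,b'₍₂₎))`. -/
noncomputable def sweedCoreR (d : A →ₗ[k] A →ₗ[k] A) (α : B →ₗ[k] B →ₗ[k] A)
    (β : B →ₗ[k] B →ₗ[k] A →ₗ[k] A) :
    ((B ⊗[k] B) ⊗[k] (B ⊗[k] B)) ⊗[k] A →ₗ[k] A :=
  TensorProduct.lift d.flip ∘ₗ
  TensorProduct.map (TensorProduct.lift α) (TensorProduct.lift (TensorProduct.lift β)) ∘ₗ
  (TensorProduct.assoc k (B ⊗[k] B) (B ⊗[k] B) A).toLinearMap ∘ₗ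
  LinearMap.rTensor A ((TensorProduct.comm k (B ⊗[k] B) (B ⊗[k] B)).toLinearMap ∘ₗ
    (TensorProduct.tensorTensorTensorComm k B B B B).toLinearMap)

/-- Core of the one-variable Sweedler-type operators `u ↦ Σ d(γ(b₍₁₎), δ(b₍₂₎,u))`. -/
noncomputable def sweedCore1L (d : A →ₗ[k] A →ₗ[k] A) (γ : B →ₗ[k] A)
    (δ : B →ₗ[k] A →ₗ[k] A) : (B ⊗[k] B) ⊗[k] A →ₗ[k] A :=
  TensorProduct.lift d ∘ₗ TensorProduct.map γ (TensorProduct.lift δ) ∘ₗ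
  (TensorProduct.assoc k B B A).toLinearMap

/-- Core of the one-variable Sweedler-type operators `u ↦ Σ d(δ(b₍₁₎,u), γ(b₍₂₎))`. -/
noncomputable def sweedCore1R (d : A →ₗ[k] A →ₗ[k] A) (γ : B →ₗ[k] A)
    (δ : B →ₗ[k] A →ₗ[k] A) : (B ⊗[k] B) ⊗[k] A →ₗ[k] A :=
  TensorProduct.lift d.flip ∘ₗ TensorProduct.map γ (TensorProduct.lift δ) ∘ₗ
  (TensorProduct.assoc k B B A).toLinearMap ∘ₗ
  LinearMap.rTensor A (TensorProduct.comm k B B).toLinearMap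

/-- `l(b,b') : u ↦ Σ (b₍₁₎b'₍₁₎)\(b₍₂₎·(b'₍₂₎u))`, where `B` acts through `z`. -/
noncomputable def opL (S : DivBialg k A) (ΔB : B →ₗ[k] B ⊗[k] B) (z : B →ₗ[k] A)
    (b b' : B) : A →ₗ[k] A :=
  sweedCoreL k S.ld (S.mul.compl₁₂ z z)
      ((LinearMap.llcomp k A A A).compl₁₂ (S.mul ∘ₗ z) (S.mul ∘ₗ z)) ∘ₗ
    TensorProduct.mk k ((B ⊗[k] B) ⊗[k] (B ⊗[k] B)) A (ΔB b ⊗ₜ[k] ΔB b')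

/-- `r(b,b') : u ↦ Σ ((ub₍₁₎)·b'₍₁₎)/(b₍₂₎b'₍₂₎)`. -/
noncomputable def opR (S : DivBialg k A) (ΔB : B →ₗ[k] B ⊗[k] B) (z : B →ₗ[k] A)
    (b b' : B) : A →ₗ[k] A :=
  sweedCoreR k S.rd (S.mul.compl₁₂ z z)
      (((LinearMap.llcomp k A A A).compl₁₂ (S.mul.flip ∘ₗ z) (S.mul.flip ∘ₗ z)).flip) ∘ₗ
    TensorProduct.mk k ((B ⊗[k] B) ⊗[k] (B ⊗[k] B)) A (ΔB b ⊗ₜ[k] ΔB b')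

/-- `s(b,b') : u ↦ Σ (b₍₁₎·(ub'₍₁₎))/(b₍₂₎b'₍₂₎)`. -/
noncomputable def opS (S : DivBialg k A) (ΔB : B →ₗ[k] B ⊗[k] B) (z : B →ₗ[k] A)
    (b b' : B) : A →ₗ[k] A :=
  sweedCoreR k S.rd (S.mul.compl₁₂ z z)
      ((LinearMap.llcomp k A A A).compl₁₂ (S.mul ∘ₗ z) (S.mul.flip ∘ₗ z)) ∘ₗ
    TensorProduct.mk k ((B ⊗[k] B) ⊗[k] (B ⊗[k] B)) A (ΔB b ⊗ₜ[k] ΔB b')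

/-- `s̄(b,b') : u ↦ Σ (b₍₁₎b'₍₁₎)\((b₍₂₎u)·b'₍₂₎)`. -/
noncomputable def opSbar (S : DivBialg k A) (ΔB : B →ₗ[k] B ⊗[k] B) (z : B →ₗ[k] A)
    (b b' : B) : A →ₗ[k] A :=
  sweedCoreL k S.ld (S.mul.compl₁₂ z z)
      (((LinearMap.llcomp k A A A).compl₁₂ (S.mul.flip ∘ₗ z) (S.mul ∘ₗ z)).flip) ∘ₗ
    TensorProduct.mk k ((B ⊗[k] B) ⊗[k] (B ⊗[k] B)) A (ΔB b ⊗ₜ[k] ΔB b')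

/-- `t(b) : u ↦ Σ b₍₁₎\(ub₍₂₎)`. -/
noncomputable def opT (S : DivBialg k A) (ΔB : B →ₗ[k] B ⊗[k] B) (z : B →ₗ[k] A)
    (b : B) : A →ₗ[k] A :=
  sweedCore1L k S.ld z (S.mul.flip ∘ₗ z) ∘ₗ TensorProduct.mk k (B ⊗[k] B) A (ΔB b)

/-- `t̄(b) : u ↦ Σ (b₍₁₎u)/b₍₂₎`. -/
noncomputable def opTbar (S : DivBialg k A) (ΔB : B →ₗ[k] B ⊗[k] B) (z : B →ₗ[k] A)
    (b : B) : A →ₗ[k] A :=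
  sweedCore1R k S.rd z (S.mul ∘ₗ z) ∘ₗ TensorProduct.mk k (B ⊗[k] B) A (ΔB b)

/-- `x` is a primitive element of the bialgebra. -/
def IsPrimitive (S : DivBialg k A) (x : A) : Prop :=
  S.Δ x = x ⊗ₜ[k] S.one + S.one ⊗ₜ[k] x

end FormalLoops

namespace FormalLoops

variable (k : Type*) [Field k]
variable {A B : Type*} [AddCommGroup A] [Module k A] [AddCommGroup B] [Module k B]

/-- The comultiplication of the tensor-product coalgebra `A ⊗ A`. -/
noncomputable def tcomul (SA : DivBialg k A) :
    A ⊗[k] A →ₗ[k] (A ⊗[k] A) ⊗[k] (A ⊗[k] A) :=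
  (TensorProduct.tensorTensorTensorComm k A A A A).toLinearMap ∘ₗ
    TensorProduct.map SA.Δ SA.Δ

/-- The counit of the tensor-product coalgebra `A ⊗ A`. -/
noncomputable def tcounit (SA : DivBialg k A) : A ⊗[k] A →ₗ[k] k :=
  (TensorProduct.lid k k).toLinearMap ∘ₗ TensorProduct.map SA.ε SA.ε

/-- The linear map `A ⊗ A → B`, `u ⊗ v ↦ ε(v) π(u)`. -/
noncomputable def pbFst (SA : DivBialg k A) (π : A →ₗ[k] B) : A ⊗[k] A →ₗ[k] B :=
  (TensorProduct.rid k B).toLinearMap ∘ₗ TensorProduct.map π SA.ε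

/-- The linear map `A ⊗ A → B`, `u ⊗ v ↦ ε(u) π(v)`. -/
noncomputable def pbSnd (SA : DivBialg k A) (π : A →ₗ[k] B) : A ⊗[k] A →ₗ[k] B :=
  (TensorProduct.lid k B).toLinearMap ∘ₗ TensorProduct.map SA.ε π

/-- The pullback `A ⊗_B A`: the sum of all subcoalgebras of the tensor-product
coalgebra `A ⊗ A` on which `u ⊗ v ↦ ε(v)π(u)` and `u ⊗ v ↦ ε(u)π(v)` agree. -/
noncomputable def pbSub (SA : DivBialg k A) (π : A →ₗ[k] B) : Submodule k (A ⊗[k] A) :=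
  sSup {C : Submodule k (A ⊗[k] A) | IsSubcoalg k (tcomul k SA) C ∧
    ∀ t ∈ C, pbFst k SA π t = pbSnd k SA π t}

/-- The data of an abelian group `(π : A → B, ⊞, 0)` in the comma category over `B`:
a linear map `⊞ = bp : A ⊗_B A → A` which lies over `B`, is a coalgebra morphism
(witnessed by a corestriction `Δpb` of the comultiplication of `A ⊗ A` to `A ⊗_B A`),
is multiplicative, commutative, associative on `F(A)` and has `0 = z ∘ π` as unit. -/
structure BoxPlusData (SA : DivBialg k A) (SB : DivBialg k B)
    (π : A →ₗ[k] B) (z : B →ₗ[k] A) where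
  bp : ↥(pbSub k SA π) →ₗ[k] A
  Δpb : ↥(pbSub k SA π) →ₗ[k] (↥(pbSub k SA π) ⊗[k] ↥(pbSub k SA π))
  Δpb_compat : ∀ t : pbSub k SA π,
    TensorProduct.map (pbSub k SA π).subtype (pbSub k SA π).subtype (Δpb t)
      = tcomul k SA (t : A ⊗[k] A)
  π_bp : ∀ t : pbSub k SA π, π (bp t) = pbFst k SA π (t : A ⊗[k] A)
  Δ_bp : ∀ t : pbSub k SA π, SA.Δ (bp t) = TensorProduct.map bp bp (Δpb t)
  ε_bp : ∀ t : pbSub k SA π, SA.ε (bp t) = tcounit k SA (t : A ⊗[k] A)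
  bp_mul : ∀ (t t' : pbSub k SA π)
      (h : TensorProduct.map₂ SA.mul SA.mul (t : A ⊗[k] A) (t' : A ⊗[k] A) ∈ pbSub k SA π),
      bp ⟨TensorProduct.map₂ SA.mul SA.mul (t : A ⊗[k] A) (t' : A ⊗[k] A), h⟩
        = SA.mul (bp t) (bp t')
  bp_flip : ∀ (t : pbSub k SA π)
      (h : (TensorProduct.comm k A A) (t : A ⊗[k] A) ∈ pbSub k SA π),
      bp ⟨(TensorProduct.comm k A A) (t : A ⊗[k] A), h⟩ = bp t
  bp_assoc : ∀ x ∈ Fsub k SA SB.one π, ∀ y ∈ Fsub k SA SB.one π, ∀ w ∈ Fsub k SA SB.one π,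
      ∀ (h1 : x ⊗ₜ[k] y ∈ pbSub k SA π) (h2 : y ⊗ₜ[k] w ∈ pbSub k SA π)
        (h3 : (bp ⟨x ⊗ₜ[k] y, h1⟩) ⊗ₜ[k] w ∈ pbSub k SA π)
        (h4 : x ⊗ₜ[k] (bp ⟨y ⊗ₜ[k] w, h2⟩) ∈ pbSub k SA π),
      bp ⟨(bp ⟨x ⊗ₜ[k] y, h1⟩) ⊗ₜ[k] w, h3⟩ = bp ⟨x ⊗ₜ[k] (bp ⟨y ⊗ₜ[k] w, h2⟩), h4⟩
  bp_unit_right : ∀ (u : A)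
      (h : (LinearMap.lTensor A (z ∘ₗ π)) (SA.Δ u) ∈ pbSub k SA π),
      bp ⟨(LinearMap.lTensor A (z ∘ₗ π)) (SA.Δ u), h⟩ = u
  bp_unit_left : ∀ (u : A)
      (h : (LinearMap.rTensor A (z ∘ₗ π)) (SA.Δ u) ∈ pbSub k SA π),
      bp ⟨(LinearMap.rTensor A (z ∘ₗ π)) (SA.Δ u), h⟩ = u

end FormalLoops

namespace FormalLoops

variable (k : Type*) [Field k]
variable {A B : Type*} [AddCommGroup A] [Module k A] [AddCommGroup B] [Module k B]

/-- For a fixed `x : A`, the linear map `b ⊗ b' ↦ (op(b,b'))(x)` associated with a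
Sweedler-type operator core. -/
noncomputable def hatOf (core : ((B ⊗[k] B) ⊗[k] (B ⊗[k] B)) ⊗[k] A →ₗ[k] A)
    (ΔB : B →ₗ[k] B ⊗[k] B) (x : A) : B ⊗[k] B →ₗ[k] A :=
  core ∘ₗ (TensorProduct.mk k ((B ⊗[k] B) ⊗[k] (B ⊗[k] B)) A).flip x ∘ₗ
    TensorProduct.map ΔB ΔB

/-- For a fixed `x : A`, the linear map `b ↦ (op(b))(x)` associated with a one-variable
Sweedler-type operator core. -/
noncomputable def hat1Of (core : (B ⊗[k] B) ⊗[k] A →ₗ[k] A)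
    (ΔB : B →ₗ[k] B ⊗[k] B) (x : A) : B →ₗ[k] A :=
  core ∘ₗ (TensorProduct.mk k (B ⊗[k] B) A).flip x ∘ₗ ΔB

/-- `b ⊗ b' ↦ r(b,b')(x)`. -/
noncomputable def rHat (S : DivBialg k A) (ΔB : B →ₗ[k] B ⊗[k] B) (z : B →ₗ[k] A)
    (x : A) : B ⊗[k] B →ₗ[k] A :=
  hatOf k (sweedCoreR k S.rd (S.mul.compl₁₂ z z)
      (((LinearMap.llcomp k A A A).compl₁₂ (S.mul.flip ∘ₗ z) (S.mul.flip ∘ₗ z)).flip)) ΔB x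

/-- `b ⊗ b' ↦ s(b,b')(x)`. -/
noncomputable def sHat (S : DivBialg k A) (ΔB : B →ₗ[k] B ⊗[k] B) (z : B →ₗ[k] A)
    (x : A) : B ⊗[k] B →ₗ[k] A :=
  hatOf k (sweedCoreR k S.rd (S.mul.compl₁₂ z z)
      ((LinearMap.llcomp k A A A).compl₁₂ (S.mul ∘ₗ z) (S.mul.flip ∘ₗ z))) ΔB x

/-- `b ⊗ b' ↦ l(b,b')(x)`. -/
noncomputable def lHat (S : DivBialg k A) (ΔB : B →ₗ[k] B ⊗[k] B) (z : B →ₗ[k] A)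
    (x : A) : B ⊗[k] B →ₗ[k] A :=
  hatOf k (sweedCoreL k S.ld (S.mul.compl₁₂ z z)
      ((LinearMap.llcomp k A A A).compl₁₂ (S.mul ∘ₗ z) (S.mul ∘ₗ z))) ΔB x

/-- `b ⊗ b' ↦ s̄(b,b')(x)`. -/
noncomputable def sbarHat (S : DivBialg k A) (ΔB : B →ₗ[k] B ⊗[k] B) (z : B →ₗ[k] A)
    (x : A) : B ⊗[k] B →ₗ[k] A :=
  hatOf k (sweedCoreL k S.ld (S.mul.compl₁₂ z z)
      (((LinearMap.llcomp k A A A).compl₁₂ (S.mul.flip ∘ₗ z) (S.mul ∘ₗ z)).flip)) ΔB x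

/-- `b ↦ t(b)(x)`. -/
noncomputable def tHat (S : DivBialg k A) (ΔB : B →ₗ[k] B ⊗[k] B) (z : B →ₗ[k] A)
    (x : A) : B →ₗ[k] A :=
  hat1Of k (sweedCore1L k S.ld z (S.mul.flip ∘ₗ z)) ΔB x

/-- `b ↦ t̄(b)(x)`. -/
noncomputable def tbarHat (S : DivBialg k A) (ΔB : B →ₗ[k] B ⊗[k] B) (z : B →ₗ[k] A)
    (x : A) : B →ₗ[k] A :=
  hat1Of k (sweedCore1R k S.rd z (S.mul ∘ₗ z)) ΔB x

/-- The iterated comultiplication `b ↦ Σ b₍₁₎ ⊗ (b₍₂₎ ⊗ b₍₃₎)`. -/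
noncomputable def comul2 (ΔB : B →ₗ[k] B ⊗[k] B) : B →ₗ[k] B ⊗[k] (B ⊗[k] B) :=
  LinearMap.lTensor B ΔB ∘ₗ ΔB

end FormalLoops

namespace FormalLoops

open Coalgebra

section Convolution

variable {k : Type*} [Field k] {C M N Q M' N' Q' : Type*}
  [AddCommGroup C] [Module k C] [Coalgebra k C]
  [AddCommGroup M'] [Module k M'] [AddCommGroup N'] [Module k N'] [AddCommGroup Q'] [Module k Q']
  [AddCommGroup M] [Module k M] [AddCommGroup N] [Module k N] [AddCommGroup Q] [Module k Q]

/-- The convolution `c ↦ Σ d(f(c₍₁₎), g(c₍₂₎))` of linear maps out of a coalgebra along a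
bilinear map `d`. -/
noncomputable def conv (d : M →ₗ[k] N →ₗ[k] Q) (f : C →ₗ[k] M) (g : C →ₗ[k] N) : C →ₗ[k] Q :=
  TensorProduct.lift d ∘ₗ TensorProduct.map f g ∘ₗ comul

lemma conv_apply (d : M →ₗ[k] N →ₗ[k] Q) (f : C →ₗ[k] M) (g : C →ₗ[k] N) (c : C) :
    conv d f g c = TensorProduct.lift d (TensorProduct.map f g (comul c)) := rfl

lemma conv_flip [IsCocomm k C] (d : M →ₗ[k] N →ₗ[k] Q) (f : C →ₗ[k] M) (g : C →ₗ[k] N) :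
    conv d.flip g f = conv d f g := by
  ext c
  rw [conv_apply, conv_apply]
  conv_lhs => rw [← comm_comul k c]
  induction comul (R := k) c with
  | zero => simp
  | tmul x y => simp
  | add x y hx hy => simp_all

lemma comul2_left (d : Q →ₗ[k] N →ₗ[k] N') (e : M →ₗ[k] M' →ₗ[k] Q)
    (f : C →ₗ[k] M) (g : C →ₗ[k] M') (h : C →ₗ[k] N) (c : C) :
    TensorProduct.lift d (LinearMap.rTensor N (TensorProduct.lift e)
      ((TensorProduct.assoc k M M' N).symm
        (TensorProduct.map f (TensorProduct.map g h) (comul2 k comul c)))) =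
      conv d (conv e f g) h c := by
  rw [conv_apply, comul2, LinearMap.comp_apply, ← coassoc_apply]
  induction comul (R := k) c with
  | zero => simp
  | add x y hx hy => simp_all
  | tmul x y =>
    simp only [LinearMap.rTensor_tmul, TensorProduct.map_tmul, TensorProduct.lift.tmul,
      conv_apply]
    induction comul (R := k) x with
    | zero => simp
    | add x y hx hy => simp_all [TensorProduct.add_tmul]
    | tmul x y => simp

lemma comul2_right (d : N →ₗ[k] Q →ₗ[k] N') (e : M →ₗ[k] M' →ₗ[k] Q)
    (f : C →ₗ[k] M) (g : C →ₗ[k] M') (h : C →ₗ[k] N) (c : C) :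
    TensorProduct.lift d (LinearMap.lTensor N (TensorProduct.lift e)
        (TensorProduct.map h (TensorProduct.map f g) (comul2 k comul c))) =
      conv d h (conv e f g) c := by
  rw [conv_apply, comul2, LinearMap.comp_apply]
  induction comul (R := k) c with
  | zero => simp
  | add x y hx hy => simp_all
  | tmul x y =>
    simp [conv_apply]

lemma conv_conv_cancel_right [Coalgebra k N] {d : Q →ₗ[k] N →ₗ[k] M} {e : M →ₗ[k] N →ₗ[k] Q}
    (h : ∀ u v, TensorProduct.lift d (LinearMap.rTensor N (e v) (comul u)) =
      counit (R := k) u • v)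
    (f : C →ₗ[k] M) (g : C →ₗc[k] N) :
    conv d (conv e f (g : C →ₗ[k] N)) (g : C →ₗ[k] N) = f := by
  ext c
  rw [← comul2_left, comul2, LinearMap.comp_apply]
  have key : ∀ t : C ⊗[k] C, TensorProduct.lift d (LinearMap.rTensor N (TensorProduct.lift e)
      ((TensorProduct.assoc k M N N).symm
        (TensorProduct.map f (TensorProduct.map (g : C →ₗ[k] N) (g : C →ₗ[k] N))
          (LinearMap.lTensor C comul t)))) =
      TensorProduct.rid k M (TensorProduct.map f counit t) := by
    intro t
    induction t with
    | zero => simp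
    | add x y hx hy => simp_all
    | tmul x y =>
      have h1 := h (g y) (f x)
      rw [← CoalgHomClass.map_comp_comul_apply, CoalgHomClass.counit_comp_apply] at h1
      simp only [LinearMap.lTensor_tmul, TensorProduct.map_tmul, TensorProduct.rid_tmul]
      rw [← h1]
      induction comul (R := k) y with
      | zero => simp
      | add x y hx hy => simp_all [TensorProduct.tmul_add]
      | tmul x y => simp
  rw [key]
  have : TensorProduct.map f (counit (R := k)) (comul c) =
      LinearMap.rTensor k f (LinearMap.lTensor C counit (comul c)) := by
    rw [← LinearMap.rTensor_comp_lTensor, LinearMap.comp_apply]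
  rw [this]
  simp

lemma conv_conv_cancel_left [IsCocomm k C] [Coalgebra k N] [IsCocomm k N]
    {d : N →ₗ[k] Q →ₗ[k] M} {e : N →ₗ[k] M →ₗ[k] Q}
    (h : ∀ u v, TensorProduct.lift d (LinearMap.lTensor N (e.flip v) (comul u)) =
      counit (R := k) u • v)
    (f : C →ₗ[k] M) (g : C →ₗc[k] N) :
    conv d (g : C →ₗ[k] N) (conv e (g : C →ₗ[k] N) f) = f := by
  rw [← conv_flip d, ← conv_flip e]
  refine conv_conv_cancel_right (fun u v => ?_) f g
  rw [← h]
  conv_lhs => rw [← comm_comul k u]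
  induction comul (R := k) u with
  | zero => simp
  | tmul x y => simp
  | add x y hx hy => simp_all

lemma comul_comul_comm [IsCocomm k C] (c : C) :
    TensorProduct.tensorTensorTensorComm k C C C C
      (TensorProduct.map comul comul (comul (R := k) c)) =
      TensorProduct.map comul comul (comul (R := k) c) :=
  (CoalgHomClass.map_comp_comul_apply (comulCoalgHom k C) c).symm

/-- The interchange law for convolutions out of a cocommutative coalgebra. -/
lemma conv_map₂_conv [IsCocomm k C] (d : M →ₗ[k] N →ₗ[k] Q) (e : M' →ₗ[k] N' →ₗ[k] Q')
    (f : C →ₗ[k] M) (f' : C →ₗ[k] M') (g : C →ₗ[k] N) (g' : C →ₗ[k] N') :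
    conv (TensorProduct.map₂ d e) (conv (TensorProduct.mk k M M') f f')
        (conv (TensorProduct.mk k N N') g g') =
      conv (TensorProduct.mk k Q Q') (conv d f g) (conv e f' g') := by
  have h1 : TensorProduct.lift (TensorProduct.map₂ d e) ∘ₗ
      TensorProduct.map (TensorProduct.map f f') (TensorProduct.map g g') =
      TensorProduct.map (TensorProduct.lift d ∘ₗ TensorProduct.map f g)
        (TensorProduct.lift e ∘ₗ TensorProduct.map f' g') ∘ₗ
        (TensorProduct.tensorTensorTensorComm k C C C C).toLinearMap := by
    ext; simp
  ext c
  have h2 := congr($h1 (TensorProduct.map comul comul (comul (R := k) c)))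
  simp only [LinearMap.comp_apply, LinearEquiv.coe_coe, comul_comul_comm] at h2
  simp only [conv, TensorProduct.lift_mk, LinearMap.id_comp, LinearMap.comp_apply]
  simpa only [← LinearMap.comp_apply, TensorProduct.map_comp, LinearMap.comp_assoc] using h2

end Convolution


section CoalgHoms

variable {k : Type*} [Field k] {C M N : Type*}
  [AddCommGroup C] [Module k C] [Coalgebra k C]
  [AddCommGroup M] [Module k M] [Coalgebra k M] [AddCommGroup N] [Module k N] [Coalgebra k N]

/-- The coalgebra morphism `M ⊗ N → C` associated with a bilinear map. -/
noncomputable def liftHom (d : M →ₗ[k] N →ₗ[k] C)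
    (hd : ∀ u v, comul (d u v) = TensorProduct.map₂ d d (comul (R := k) u) (comul (R := k) v))
    (hd' : ∀ u v, counit (R := k) (d u v) = counit (R := k) u * counit (R := k) v) :
    M ⊗[k] N →ₗc[k] C where
  toLinearMap := TensorProduct.lift d
  counit_comp := by
    ext u v
    simp [hd', mul_comm]
  map_comp_comul := by
    ext u v
    simp only [TensorProduct.AlgebraTensorModule.curry_apply, TensorProduct.curry_apply,
      LinearMap.coe_restrictScalars, LinearMap.comp_apply, TensorProduct.comul_tmul,
      TensorProduct.lift.tmul, hd]
    induction comul (R := k) u with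
    | zero => simp
    | add x y hx hy => simp_all [TensorProduct.add_tmul]
    | tmul x y =>
      induction comul (R := k) v with
      | zero => simp
      | add x y hx hy => simp_all [TensorProduct.tmul_add]
      | tmul x y => simp

@[simp]
lemma liftHom_tmul (d : M →ₗ[k] N →ₗ[k] C) (hd hd') (x : M) (y : N) :
    liftHom d hd hd' (x ⊗ₜ y) = d x y := rfl

variable (k M N) in
/-- The flip as a morphism of coalgebras. -/
noncomputable def commHom : M ⊗[k] N →ₗc[k] N ⊗[k] M where
  toLinearMap := (TensorProduct.comm k M N).toLinearMap
  counit_comp := by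
    ext u v
    simp [mul_comm]
  map_comp_comul := by
    ext u v
    simp only [TensorProduct.AlgebraTensorModule.curry_apply, TensorProduct.curry_apply,
      LinearMap.coe_restrictScalars, LinearMap.comp_apply, TensorProduct.comul_tmul,
      LinearEquiv.coe_coe, TensorProduct.comm_tmul]
    induction comul (R := k) u with
    | zero => simp
    | add x y hx hy => simp_all [TensorProduct.add_tmul, TensorProduct.tmul_add]
    | tmul x y =>
      induction comul (R := k) v with
      | zero => simp
      | add x y hx hy => simp_all [TensorProduct.add_tmul, TensorProduct.tmul_add]
      | tmul x y => simp

/-- For coalgebra morphisms `ρ : M ⊗ C → N` and `m : C → N`, the coalgebra morphism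
`x ⊗ c ↦ Σ ρ(x ⊗ c₍₁₎) ⊗ m(c₍₂₎)`. -/
noncomputable def pairHom [IsCocomm k C] (ρ : M ⊗[k] C →ₗc[k] N) (m : C →ₗc[k] N) :
    M ⊗[k] C →ₗc[k] N ⊗[k] N :=
  ((Coalgebra.TensorProduct.map ρ m).comp
    ((Coalgebra.TensorProduct.assoc k k M C C).symm : M ⊗[k] (C ⊗[k] C) →ₗc[k] _)).comp
    (Coalgebra.TensorProduct.map (CoalgHom.id k M) (comulCoalgHom k C))

lemma pairHom_tmul [IsCocomm k C] (ρ : M ⊗[k] C →ₗc[k] N) (m : C →ₗc[k] N) (x : M) (c : C) :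
    pairHom ρ m (x ⊗ₜ c) = TensorProduct.map ((ρ : M ⊗[k] C →ₗ[k] N) ∘ₗ TensorProduct.mk k M C x)
      (m : C →ₗ[k] N) (comul c) := by
  change Coalgebra.TensorProduct.map ρ m
    ((TensorProduct.assoc k M C C).symm (x ⊗ₜ[k] comul c)) = _
  induction comul (R := k) c with
  | zero => simp
  | tmul y y' => simp
  | add y y' hy hy' => simp_all [TensorProduct.tmul_add]

lemma conv_self {Q : Type*} [AddCommGroup Q] [Module k Q] {d : N →ₗ[k] N →ₗ[k] Q}
    {e : Q} (h : ∀ u, TensorProduct.lift d (comul (R := k) u) = counit (R := k) u • e)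
    (f : C →ₗc[k] N) (c : C) :
    conv d (f : C →ₗ[k] N) (f : C →ₗ[k] N) c = counit (R := k) c • e := by
  rw [conv_apply, CoalgHomClass.map_comp_comul_apply, h, CoalgHomClass.counit_comp_apply]

lemma isSubcoalg_range (f : C →ₗc[k] N) :
    IsSubcoalg k (comul (R := k) (A := N)) (LinearMap.range (f : C →ₗ[k] N)) := by
  rintro _ ⟨c, rfl⟩
  refine ⟨TensorProduct.map (f : C →ₗ[k] N).rangeRestrict (f : C →ₗ[k] N).rangeRestrict
    (comul c), ?_⟩
  rw [← LinearMap.comp_apply, ← TensorProduct.map_comp, LinearMap.subtype_comp_codRestrict]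
  exact CoalgHomClass.map_comp_comul_apply f c

end CoalgHoms

section DivBialg

variable {k : Type*} [Field k] {A B C C' : Type*}
  [AddCommGroup A] [Module k A] [AddCommGroup B] [Module k B]
  [AddCommGroup C'] [Module k C'] [Coalgebra k C'] [AddCommGroup C] [Module k C] [Coalgebra k C]

/-- The coalgebra underlying a bialgebra with divisions. -/
abbrev DivBialg.coalgebra (S : DivBialg k A) : Coalgebra k A where
  comul := S.Δ
  counit := S.ε
  coassoc := LinearMap.ext S.coassoc
  rTensor_counit_comp_comul := LinearMap.ext fun u =>
    (TensorProduct.lid k A).injective (by simpa using S.counit_left u)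
  lTensor_counit_comp_comul := LinearMap.ext fun u =>
    (TensorProduct.rid k A).injective (by simpa using S.counit_right u)

lemma DivBialg.isCocomm (S : DivBialg k A) : @IsCocomm k A _ _ _ S.coalgebra :=
  @IsCocomm.mk k A _ _ _ S.coalgebra (LinearMap.ext S.cocomm)

lemma DivBialg.rd_one (S : DivBialg k A) (u : A) : S.rd u S.one = u := by
  simpa [S.Δ_one, S.ε_one, S.mul_one] using S.rd_mul_cancel S.one u

variable (SA : DivBialg k A) (SB : DivBialg k B) (π : A →ₗ[k] B) (z : B →ₗ[k] A)

lemma lTensor_comul_of_mem_Fsub (hz : z SB.one = SA.one) {x : A}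
    (hx : x ∈ Fsub k SA SB.one π) :
    LinearMap.lTensor A (z ∘ₗ π) (SA.Δ x) = x ⊗ₜ SA.one := by
  suffices Fsub k SA SB.one π ≤ LinearMap.eqLocus (LinearMap.lTensor A (z ∘ₗ π) ∘ₗ SA.Δ)
    ((TensorProduct.mk k A A).flip SA.one) from this hx
  refine sSup_le fun D ⟨hD, hD'⟩ y hy => ?_
  obtain ⟨w, hw⟩ := hD y hy
  have h1 : LinearMap.lTensor A (z ∘ₗ π) ∘ₗ TensorProduct.map D.subtype D.subtype =
      LinearMap.lTensor A (SA.ε.smulRight SA.one) ∘ₗ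
        TensorProduct.map D.subtype D.subtype := by
    ext u v
    simp [hD' v v.2, hz]
  have h2 := congr($h1 w)
  simp only [LinearMap.comp_apply, hw] at h2
  change LinearMap.lTensor A (z ∘ₗ π) (SA.Δ y) = y ⊗ₜ SA.one
  rw [h2]
  conv_rhs => rw [← SA.counit_right y]
  induction SA.Δ y with
  | zero => simp
  | tmul a b => simp [TensorProduct.smul_tmul]
  | add a b ha hb => simp_all [TensorProduct.add_tmul]

lemma rTensor_comul_of_mem_Fsub (hz : z SB.one = SA.one) {x : A}
    (hx : x ∈ Fsub k SA SB.one π) :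
    LinearMap.rTensor A (z ∘ₗ π) (SA.Δ x) = SA.one ⊗ₜ x := by
  have h := congr(TensorProduct.comm k A A $(lTensor_comul_of_mem_Fsub SA SB π z hz hx))
  rw [TensorProduct.comm_tmul, ← SA.cocomm x] at h
  rw [← h]
  induction SA.Δ x with
  | zero => simp
  | tmul a b => simp
  | add a b ha hb => simp_all

lemma pbFst_map₂_mul (hπ : DivBialgHom k SA SB π) (s t : A ⊗[k] A) :
    pbFst k SA π (TensorProduct.map₂ SA.mul SA.mul s t) =
      SB.mul (pbFst k SA π s) (pbFst k SA π t) := by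
  induction s with
  | zero => simp
  | add x y hx hy => simp_all
  | tmul x y =>
    induction t with
    | zero => simp
    | add x y hx hy => simp_all
    | tmul x' y' => simp [pbFst, SA.ε_mul, hπ.map_mul, mul_smul]; rw [smul_comm]

lemma pbSnd_map₂_mul (hπ : DivBialgHom k SA SB π) (s t : A ⊗[k] A) :
    pbSnd k SA π (TensorProduct.map₂ SA.mul SA.mul s t) =
      SB.mul (pbSnd k SA π s) (pbSnd k SA π t) := by
  induction s with
  | zero => simp
  | add x y hx hy => simp_all
  | tmul x y =>
    induction t with
    | zero => simp
    | add x y hx hy => simp_all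
    | tmul x' y' => simp [pbSnd, SA.ε_mul, hπ.map_mul, mul_smul]; rw [smul_comm]

variable [Coalgebra k A]

lemma range_le_Fsub (hΔ : SA.Δ = comul) (hε : SA.ε = counit) (f : C →ₗc[k] A)
    (hf : ∀ c, π (f c) = counit (R := k) c • SB.one) (c : C) : f c ∈ Fsub k SA SB.one π := by
  refine (show LinearMap.range (f : C →ₗ[k] A) ≤ Fsub k SA SB.one π from
    le_sSup ⟨hΔ ▸ isSubcoalg_range f, ?_⟩)
    ⟨c, rfl⟩
  rintro _ ⟨c, rfl⟩
  rw [hε]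
  exact (hf c).trans congr($((CoalgHomClass.counit_comp_apply f c).symm) • SB.one)

lemma range_le_pbSub (hΔ : SA.Δ = comul) (f : C →ₗc[k] A ⊗[k] A)
    (hf : ∀ c, pbFst k SA π (f c) = pbSnd k SA π (f c)) (c : C) : f c ∈ pbSub k SA π := by
  have h : tcomul k SA = comul (R := k) (A := A ⊗[k] A) := by
    rw [tcomul, hΔ]; rfl
  refine (show LinearMap.range (f : C →ₗ[k] A ⊗[k] A) ≤ pbSub k SA π from
    le_sSup ⟨h ▸ isSubcoalg_range f, ?_⟩)
    ⟨c, rfl⟩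
  rintro _ ⟨c, rfl⟩
  exact hf c

/-- Multiplication as a coalgebra morphism. -/
noncomputable def mulHom (hΔ : SA.Δ = comul) (hε : SA.ε = counit) : A ⊗[k] A →ₗc[k] A :=
  liftHom SA.mul (hΔ ▸ SA.Δ_mul) (hε ▸ SA.ε_mul)

/-- Left division as a coalgebra morphism. -/
noncomputable def ldHom (hΔ : SA.Δ = comul) (hε : SA.ε = counit) : A ⊗[k] A →ₗc[k] A :=
  liftHom SA.ld (hΔ ▸ SA.Δ_ld) (hε ▸ SA.ε_ld)

/-- Right division as a coalgebra morphism. -/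
noncomputable def rdHom (hΔ : SA.Δ = comul) (hε : SA.ε = counit) : A ⊗[k] A →ₗc[k] A :=
  liftHom SA.rd (hΔ ▸ SA.Δ_rd) (hε ▸ SA.ε_rd)

lemma comul_map₂_mul (hΔ : SA.Δ = comul) (s t : A ⊗[k] A) :
    comul (R := k) (TensorProduct.map₂ SA.mul SA.mul s t) =
      TensorProduct.map₂ (TensorProduct.map₂ SA.mul SA.mul) (TensorProduct.map₂ SA.mul SA.mul)
        (comul (R := k) s) (comul (R := k) t) := by
  induction s with
  | zero => simp
  | add x y hx hy => simp_all
  | tmul x y =>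
    induction t with
    | zero => simp
    | add x y hx hy => simp_all
    | tmul x' y' =>
      have h : ∀ u v, comul (R := k) (SA.mul u v) =
          TensorProduct.map₂ SA.mul SA.mul (comul u) (comul v) := hΔ ▸ SA.Δ_mul
      simp only [TensorProduct.map₂_apply_tmul, TensorProduct.map_tmul, TensorProduct.comul_tmul, h]
      induction comul (R := k) x with
      | zero => simp
      | add _ _ h h' => simp_all [TensorProduct.add_tmul]
      | tmul x₁ x₂ =>
      induction comul (R := k) y with
      | zero => simp
      | add _ _ h h' => simp_all [TensorProduct.tmul_add]
      | tmul y₁ y₂ =>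
      induction comul (R := k) x' with
      | zero => simp
      | add _ _ h h' => simp_all [TensorProduct.add_tmul]
      | tmul x'₁ x'₂ =>
      induction comul (R := k) y' with
      | zero => simp
      | add _ _ h h' => simp_all [TensorProduct.tmul_add]
      | tmul y'₁ y'₂ => simp

lemma counit_map₂_mul (hε : SA.ε = counit) (s t : A ⊗[k] A) :
    counit (R := k) (TensorProduct.map₂ SA.mul SA.mul s t) =
      counit (R := k) s * counit (R := k) t := by
  induction s with
  | zero => simp
  | add x y hx hy => simp_all [add_mul]
  | tmul x y =>
    induction t with
    | zero => simp
    | add x y hx hy => simp_all [mul_add]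
    | tmul x' y' => simp [← hε, SA.ε_mul]; ring

lemma map₂_mul_mem_pbSub (hΔ : SA.Δ = comul) (hε : SA.ε = counit) (hπ : DivBialgHom k SA SB π)
    (f : C →ₗc[k] A ⊗[k] A) (hf : ∀ c, pbFst k SA π (f c) = pbSnd k SA π (f c))
    (g : C' →ₗc[k] A ⊗[k] A) (hg : ∀ c, pbFst k SA π (g c) = pbSnd k SA π (g c))
    (c : C) (c' : C') :
    TensorProduct.map₂ SA.mul SA.mul (f c) (g c') ∈ pbSub k SA π := by
  refine range_le_pbSub SA π hΔ ((liftHom (TensorProduct.map₂ SA.mul SA.mul)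
    (comul_map₂_mul SA hΔ) (counit_map₂_mul SA hε)).comp (Coalgebra.TensorProduct.map f g))
    (fun t => ?_) (c ⊗ₜ c')
  induction t with
  | zero => simp
  | add x y hx hy => simp_all
  | tmul x y =>
    simp [pbFst_map₂_mul SA SB π hπ, pbSnd_map₂_mul SA SB π hπ, hf, hg]

end DivBialg


section ProductFormula

variable {k : Type*} [Field k] {A B C : Type*}
  [AddCommGroup A] [Module k A] [AddCommGroup B] [Module k B]
  [AddCommGroup C] [Module k C] [Coalgebra k C]

lemma DivBialg.lift_rd_comul (S : DivBialg k A) (u : A) :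
    TensorProduct.lift S.rd (S.Δ u) = S.ε u • S.one := by
  have h : S.mul S.one = LinearMap.id := LinearMap.ext S.one_mul
  simpa [h] using S.rd_mul_cancel u S.one

lemma DivBialg.lift_ld_comul (S : DivBialg k A) (u : A) :
    TensorProduct.lift S.ld (S.Δ u) = S.ε u • S.one := by
  have h : S.mul.flip S.one = LinearMap.id := LinearMap.ext S.mul_one
  simpa [h] using S.ld_mul_cancel u S.one

variable {SA : DivBialg k A} {SB : DivBialg k B} {π : A →ₗ[k] B} {z : B →ₗ[k] A}

lemma pbFst_lTensor_comul (hz : DivBialgHom k SB SA z) (hπ : DivBialgHom k SA SB π) (u : A) :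
    pbFst k SA π (LinearMap.lTensor A (z ∘ₗ π) (SA.Δ u)) = π u := by
  conv_rhs => rw [← SA.counit_right u]
  induction SA.Δ u with
  | zero => simp
  | add _ _ h h' => simp_all
  | tmul _ _ => simp [pbFst, hz.map_ε, hπ.map_ε]

lemma pbSnd_lTensor_comul (hsec : π ∘ₗ z = LinearMap.id) (u : A) :
    pbSnd k SA π (LinearMap.lTensor A (z ∘ₗ π) (SA.Δ u)) = π u := by
  conv_rhs => rw [← SA.counit_left u]
  have h (b : B) : π (z b) = b := congr($hsec b)
  induction SA.Δ u with
  | zero => simp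
  | add _ _ h h' => simp_all
  | tmul _ _ => simp [pbSnd, h]

lemma pbFst_rTensor_comul (hsec : π ∘ₗ z = LinearMap.id) (u : A) :
    pbFst k SA π (LinearMap.rTensor A (z ∘ₗ π) (SA.Δ u)) = π u := by
  conv_rhs => rw [← SA.counit_right u]
  have h (b : B) : π (z b) = b := congr($hsec b)
  induction SA.Δ u with
  | zero => simp
  | add _ _ h h' => simp_all
  | tmul _ _ => simp [pbFst, h]

lemma pbSnd_rTensor_comul (hz : DivBialgHom k SB SA z) (hπ : DivBialgHom k SA SB π) (u : A) :
    pbSnd k SA π (LinearMap.rTensor A (z ∘ₗ π) (SA.Δ u)) = π u := by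
  conv_rhs => rw [← SA.counit_left u]
  induction SA.Δ u with
  | zero => simp
  | add _ _ h h' => simp_all
  | tmul _ _ => simp [pbSnd, hz.map_ε, hπ.map_ε]

lemma DivBialgHom.lift_compl₁₂ (hz : DivBialgHom k SB SA z) :
    TensorProduct.lift (SA.mul.compl₁₂ z z) = z ∘ₗ TensorProduct.lift SB.mul := by
  ext b b'
  simp [hz.map_mul]

lemma lTensor_comul_section (hz : DivBialgHom k SB SA z) (hsec : π ∘ₗ z = LinearMap.id) (b : B) :
    LinearMap.lTensor A (z ∘ₗ π) (SA.Δ (z b)) = TensorProduct.map z z (SB.Δ b) := by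
  have h (b : B) : π (z b) = b := congr($hsec b)
  rw [← hz.map_Δ]
  induction SB.Δ b with
  | zero => simp
  | add _ _ h h' => simp_all
  | tmul _ _ => simp [h]

lemma rTensor_comul_section (hz : DivBialgHom k SB SA z) (hsec : π ∘ₗ z = LinearMap.id) (b : B) :
    LinearMap.rTensor A (z ∘ₗ π) (SA.Δ (z b)) = TensorProduct.map z z (SB.Δ b) := by
  have h (b : B) : π (z b) = b := congr($hsec b)
  rw [← hz.map_Δ]
  induction SB.Δ b with
  | zero => simp
  | add _ _ h h' => simp_all
  | tmul _ _ => simp [h]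

lemma lTensor_map₂_mul (hz : DivBialgHom k SB SA z) (hπ : DivBialgHom k SA SB π)
    (s t : A ⊗[k] A) :
    LinearMap.lTensor A (z ∘ₗ π) (TensorProduct.map₂ SA.mul SA.mul s t) =
      TensorProduct.map₂ SA.mul SA.mul (LinearMap.lTensor A (z ∘ₗ π) s)
        (LinearMap.lTensor A (z ∘ₗ π) t) := by
  induction s with
  | zero => simp
  | add _ _ h h' => simp_all
  | tmul _ _ =>
    induction t with
    | zero => simp
    | add _ _ h h' => simp_all
    | tmul _ _ => simp [hπ.map_mul, hz.map_mul]

lemma rTensor_map₂_mul (hz : DivBialgHom k SB SA z) (hπ : DivBialgHom k SA SB π)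
    (s t : A ⊗[k] A) :
    LinearMap.rTensor A (z ∘ₗ π) (TensorProduct.map₂ SA.mul SA.mul s t) =
      TensorProduct.map₂ SA.mul SA.mul (LinearMap.rTensor A (z ∘ₗ π) s)
        (LinearMap.rTensor A (z ∘ₗ π) t) := by
  induction s with
  | zero => simp
  | add _ _ h h' => simp_all
  | tmul _ _ =>
    induction t with
    | zero => simp
    | add _ _ h h' => simp_all
    | tmul _ _ => simp [hπ.map_mul, hz.map_mul]

variable [Coalgebra k B]

lemma comul2_tmul (b b' : B) :
    LinearMap.lTensor (B ⊗[k] B) (TensorProduct.tensorTensorTensorComm k B B B B).toLinearMap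
      (TensorProduct.tensorTensorTensorComm k B (B ⊗[k] B) B (B ⊗[k] B)
        (comul2 k comul b ⊗ₜ[k] comul2 k comul b')) =
      comul2 k (comul (R := k) (A := B ⊗[k] B)) (b ⊗ₜ b') := by
  simp only [comul2, LinearMap.comp_apply, TensorProduct.comul_tmul]
  induction comul (R := k) b with
  | zero => simp
  | add _ _ h h' => simp_all [TensorProduct.add_tmul]
  | tmul x y =>
    induction comul (R := k) b' with
    | zero => simp
    | add _ _ h h' => simp_all [TensorProduct.tmul_add]
    | tmul x' y' =>
      simp only [LinearMap.lTensor_tmul, TensorProduct.tensorTensorTensorComm_tmul,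
        TensorProduct.AlgebraTensorModule.tensorTensorTensorComm_tmul]
      rfl

lemma hatOf_sweedCoreL (d : A →ₗ[k] A →ₗ[k] A) (α : B →ₗ[k] B →ₗ[k] A)
    (β : B →ₗ[k] B →ₗ[k] A →ₗ[k] A) (x : A) :
    hatOf k (sweedCoreL k d α β) comul x =
      conv d (TensorProduct.lift α) (TensorProduct.lift (β.compr₂ (LinearMap.applyₗ x))) := by
  ext b b'
  simp only [hatOf, sweedCoreL, conv, TensorProduct.AlgebraTensorModule.curry_apply,
    TensorProduct.curry_apply, LinearMap.coe_restrictScalars, LinearMap.comp_apply,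
    TensorProduct.comul_tmul, TensorProduct.map_tmul]
  induction comul (R := k) b with
  | zero => simp
  | add _ _ h h' => simp_all [TensorProduct.add_tmul]
  | tmul _ _ =>
    induction comul (R := k) b' with
    | zero => simp
    | add _ _ h h' => simp_all [TensorProduct.tmul_add]
    | tmul _ _ => simp

lemma hatOf_sweedCoreR (d : A →ₗ[k] A →ₗ[k] A) (α : B →ₗ[k] B →ₗ[k] A)
    (β : B →ₗ[k] B →ₗ[k] A →ₗ[k] A) (x : A) :
    hatOf k (sweedCoreR k d α β) comul x =
      conv d (TensorProduct.lift (β.compr₂ (LinearMap.applyₗ x))) (TensorProduct.lift α) := by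
  ext b b'
  simp only [hatOf, sweedCoreR, conv, TensorProduct.AlgebraTensorModule.curry_apply,
    TensorProduct.curry_apply, LinearMap.coe_restrictScalars, LinearMap.comp_apply,
    TensorProduct.comul_tmul, TensorProduct.map_tmul]
  induction comul (R := k) b with
  | zero => simp
  | add _ _ h h' => simp_all [TensorProduct.add_tmul]
  | tmul _ _ =>
    induction comul (R := k) b' with
    | zero => simp
    | add _ _ h h' => simp_all [TensorProduct.tmul_add]
    | tmul _ _ => simp

variable [Coalgebra k A]

/-- The coalgebra morphism underlying a morphism of bialgebras with divisions. -/
def DivBialgHom.coalgHom {SA : DivBialg k A} {SB : DivBialg k B} {π : A →ₗ[k] B}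
    (h : DivBialgHom k SA SB π) (hΔA : SA.Δ = comul) (hεA : SA.ε = counit)
    (hΔB : SB.Δ = comul) (hεB : SB.ε = counit) : A →ₗc[k] B where
  toLinearMap := π
  counit_comp := LinearMap.ext fun u => hεA ▸ hεB ▸ h.map_ε u
  map_comp_comul := LinearMap.ext fun u => hΔA ▸ hΔB ▸ h.map_Δ u

lemma conv_rd_mem_Fsub [IsCocomm k C] (hΔA : SA.Δ = comul) (hεA : SA.ε = counit)
    (hΔB : SB.Δ = comul) (hεB : SB.ε = counit) (hπ : DivBialgHom k SA SB π)
    (ρ : A ⊗[k] C →ₗc[k] A) (m : C →ₗc[k] A)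
    (h : ∀ x c, π (ρ (x ⊗ₜ c)) = counit (R := k) x • π (m c)) (x : A) (c : C) :
    conv SA.rd ((ρ : A ⊗[k] C →ₗ[k] A) ∘ₗ TensorProduct.mk k A C x) (m : C →ₗ[k] A) c ∈
      Fsub k SA SB.one π := by
  have hm : ∀ x c, rdHom SA hΔA hεA (pairHom ρ m (x ⊗ₜ c)) =
      conv SA.rd ((ρ : A ⊗[k] C →ₗ[k] A) ∘ₗ TensorProduct.mk k A C x) (m : C →ₗ[k] A) c := by
    intro x c
    rw [pairHom_tmul]; rfl
  rw [← hm]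
  refine range_le_Fsub SA SB π hΔA hεA ((rdHom SA hΔA hεA).comp (pairHom ρ m)) (fun t => ?_) _
  induction t with
  | zero => simp
  | add _ _ h h' => simp_all [add_smul]
  | tmul x c =>
    have h1 := conv_self (d := SB.rd) (e := SB.one) (hΔB ▸ hεB ▸ SB.lift_rd_comul)
      ((hπ.coalgHom hΔA hεA hΔB hεB).comp m) c
    rw [CoalgHom.comp_apply, hm, TensorProduct.counit_tmul, smul_eq_mul, mul_comm, mul_smul, ← h1,
      conv_apply, conv_apply]
    induction comul (R := k) c with
    | zero => simp
    | add _ _ h h' => simp_all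
    | tmul y y' =>
      change π (SA.rd (ρ (x ⊗ₜ y)) (m y')) = _ • SB.rd (π (m y)) (π (m y'))
      rw [hπ.map_rd, h, map_smul, LinearMap.smul_apply]

lemma conv_ld_mem_Fsub [IsCocomm k C] (hΔA : SA.Δ = comul) (hεA : SA.ε = counit)
    (hΔB : SB.Δ = comul) (hεB : SB.ε = counit) (hπ : DivBialgHom k SA SB π)
    (ρ : A ⊗[k] C →ₗc[k] A) (m : C →ₗc[k] A)
    (h : ∀ x c, π (ρ (x ⊗ₜ c)) = counit (R := k) x • π (m c)) (x : A) (c : C) :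
    conv SA.ld (m : C →ₗ[k] A) ((ρ : A ⊗[k] C →ₗ[k] A) ∘ₗ TensorProduct.mk k A C x) c ∈
      Fsub k SA SB.one π := by
  have hm : ∀ x c, ldHom SA hΔA hεA (commHom k A A (pairHom ρ m (x ⊗ₜ c))) =
      conv SA.ld (m : C →ₗ[k] A) ((ρ : A ⊗[k] C →ₗ[k] A) ∘ₗ TensorProduct.mk k A C x) c := by
    intro x c
    rw [pairHom_tmul, ← conv_flip, conv_apply]
    induction comul (R := k) c with
    | zero => simp
    | add _ _ h h' => simp_all
    | tmul y y' => rfl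
  rw [← hm]
  refine range_le_Fsub SA SB π hΔA hεA
    ((ldHom SA hΔA hεA).comp ((commHom k A A).comp (pairHom ρ m))) (fun t => ?_) _
  induction t with
  | zero => simp
  | add _ _ h h' => simp_all [add_smul]
  | tmul x c =>
    have h1 := conv_self (d := SB.ld) (e := SB.one) (hΔB ▸ hεB ▸ SB.lift_ld_comul)
      ((hπ.coalgHom hΔA hεA hΔB hεB).comp m) c
    rw [CoalgHom.comp_apply, CoalgHom.comp_apply, hm, TensorProduct.counit_tmul, smul_eq_mul,
      mul_comm, mul_smul, ← h1, conv_apply, conv_apply]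
    induction comul (R := k) c with
    | zero => simp
    | add _ _ h h' => simp_all
    | tmul y y' =>
      change π (SA.ld (m y) (ρ (x ⊗ₜ y'))) = _ • SB.ld (π (m y)) (π (m y'))
      rw [hπ.map_ld, h, map_smul]

/-- There is a coalgebra endomorphism with image `F(A)` fixing `F(A)`, namely
`u ↦ Σ u₍₁₎/0(π(u₍₂₎))`. -/
lemma exists_coalgHom_Fsub [IsCocomm k A] (hΔA : SA.Δ = comul) (hεA : SA.ε = counit)
    (hΔB : SB.Δ = comul) (hεB : SB.ε = counit)
    (hπ : DivBialgHom k SA SB π) (hz : DivBialgHom k SB SA z) (hsec : π ∘ₗ z = LinearMap.id) :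
    ∃ p : A →ₗc[k] A, (∀ x ∈ Fsub k SA SB.one π, p x = x) ∧
      ∀ u, π (p u) = counit (R := k) u • SB.one := by
  have h (b : B) : π (z b) = b := congr($hsec b)
  let πH := hπ.coalgHom hΔA hεA hΔB hεB
  let zH := hz.coalgHom hΔB hεB hΔA hεA
  let p : A →ₗc[k] A := (rdHom SA hΔA hεA).comp
    ((Coalgebra.TensorProduct.map (CoalgHom.id k A) (zH.comp πH)).comp (comulCoalgHom k A))
  have hp (u : A) : p u = TensorProduct.lift SA.rd (LinearMap.lTensor A (z ∘ₗ π) (SA.Δ u)) := by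
    rw [hΔA]; rfl
  refine ⟨p, fun x hx => ?_, fun u => ?_⟩
  · rw [hp, lTensor_comul_of_mem_Fsub SA SB π z hz.map_one hx]
    exact SA.rd_one x
  · rw [hp, ← conv_self (d := SB.rd) (e := SB.one) (hΔB ▸ hεB ▸ SB.lift_rd_comul) πH u,
      conv_apply, ← hΔA]
    induction SA.Δ u with
    | zero => simp
    | add _ _ h h' => simp_all
    | tmul y y' =>
      change π (SA.rd y (z (π y'))) = SB.rd (π y) (π y')
      rw [hπ.map_rd, h]

/-- A linear extension of `⊞` to `A ⊗ A`, with its multiplicativity on the elements built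
from `F(A)` and `B`. -/
lemma exists_boxPlus_extension [IsCocomm k A] (hΔA : SA.Δ = comul) (hεA : SA.ε = counit)
    (hΔB : SB.Δ = comul) (hεB : SB.ε = counit)
    (hπ : DivBialgHom k SA SB π) (hz : DivBialgHom k SB SA z) (hsec : π ∘ₗ z = LinearMap.id)
    (P : BoxPlusData k SA SB π z) :
    ∃ β : A ⊗[k] A →ₗ[k] A,
      (∀ u u' : A, β (TensorProduct.map₂ SA.mul SA.mul
        (LinearMap.lTensor A (z ∘ₗ π) (SA.Δ u)) (LinearMap.rTensor A (z ∘ₗ π) (SA.Δ u'))) =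
          SA.mul u u') ∧
      (∀ y ∈ Fsub k SA SB.one π, ∀ y' ∈ Fsub k SA SB.one π, ∀ b : B,
        β (TensorProduct.map₂ SA.mul SA.mul (y ⊗ₜ y') (TensorProduct.map z z (SB.Δ b))) =
          SA.mul (SA.mul y y') (z b)) ∧
      (∀ y ∈ Fsub k SA SB.one π, ∀ y' ∈ Fsub k SA SB.one π, ∀ b : B,
        β (TensorProduct.map₂ SA.mul SA.mul (TensorProduct.map z z (SB.Δ b)) (y ⊗ₜ y')) =
          SA.mul (z b) (SA.mul y y')) := by
  obtain ⟨β, hβ⟩ := LinearMap.exists_extend P.bp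
  replace hβ : ∀ t (h : t ∈ pbSub k SA π), β t = P.bp ⟨t, h⟩ := fun t h => congr($hβ ⟨t, h⟩)
  obtain ⟨p, hp, hπp⟩ := exists_coalgHom_Fsub hΔA hεA hΔB hεB hπ hz hsec
  let zπ := (hz.coalgHom hΔB hεB hΔA hεA).comp (hπ.coalgHom hΔA hεA hΔB hεB)
  let g₁ : A →ₗc[k] A ⊗[k] A :=
    (Coalgebra.TensorProduct.map (CoalgHom.id k A) zπ).comp (comulCoalgHom k A)
  let g₂ : A →ₗc[k] A ⊗[k] A :=
    (Coalgebra.TensorProduct.map zπ (CoalgHom.id k A)).comp (comulCoalgHom k A)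
  let g₃ : A ⊗[k] A →ₗc[k] A ⊗[k] A := Coalgebra.TensorProduct.map p p
  have hg₁' (u) : g₁ u = LinearMap.lTensor A (z ∘ₗ π) (SA.Δ u) := by rw [hΔA]; rfl
  have hg₂' (u) : g₂ u = LinearMap.rTensor A (z ∘ₗ π) (SA.Δ u) := by rw [hΔA]; rfl
  have hg₁ (u) : pbFst k SA π (g₁ u) = pbSnd k SA π (g₁ u) := by
    rw [hg₁', pbFst_lTensor_comul hz hπ, pbSnd_lTensor_comul hsec]
  have hg₂ (u) : pbFst k SA π (g₂ u) = pbSnd k SA π (g₂ u) := by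
    rw [hg₂', pbFst_rTensor_comul hsec, pbSnd_rTensor_comul hz hπ]
  have hg₃ (t) : pbFst k SA π (g₃ t) = pbSnd k SA π (g₃ t) := by
    induction t with
    | zero => simp
    | add _ _ h h' => simp_all
    | tmul x y => simp [g₃, pbFst, pbSnd, hπp, hεA, smul_smul, mul_comm]
  have hβ₁ (u) : β (g₁ u) = u := by
    have h := range_le_pbSub SA π hΔA g₁ hg₁ u
    rw [hg₁'] at h ⊢
    rw [hβ _ h, P.bp_unit_right]
  have hβ₂ (u) : β (g₂ u) = u := by
    have h := range_le_pbSub SA π hΔA g₂ hg₂ u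
    rw [hg₂'] at h ⊢
    rw [hβ _ h, P.bp_unit_left]
  have hmul {s t} (hs : s ∈ pbSub k SA π) (ht : t ∈ pbSub k SA π)
      (h : TensorProduct.map₂ SA.mul SA.mul s t ∈ pbSub k SA π) :
      β (TensorProduct.map₂ SA.mul SA.mul s t) = SA.mul (β s) (β t) := by
    rw [hβ _ h, hβ _ hs, hβ _ ht]
    exact P.bp_mul ⟨s, hs⟩ ⟨t, ht⟩ h
  have h₁ (u u' : A) : β (TensorProduct.map₂ SA.mul SA.mul (g₁ u) (g₂ u')) = SA.mul u u' := by
    rw [hmul (range_le_pbSub SA π hΔA g₁ hg₁ u) (range_le_pbSub SA π hΔA g₂ hg₂ u')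
      (map₂_mul_mem_pbSub SA SB π hΔA hεA hπ g₁ hg₁ g₂ hg₂ u u'), hβ₁, hβ₂]
  have hyy {y y'} (hy : y ∈ Fsub k SA SB.one π) (hy' : y' ∈ Fsub k SA SB.one π) :
      β (y ⊗ₜ y') = SA.mul y y' := by
    rw [← h₁, hg₁', hg₂', lTensor_comul_of_mem_Fsub SA SB π z hz.map_one hy,
      rTensor_comul_of_mem_Fsub SA SB π z hz.map_one hy']
    simp [SA.one_mul, SA.mul_one]
  have hg₃' {y y'} (hy : y ∈ Fsub k SA SB.one π) (hy' : y' ∈ Fsub k SA SB.one π) :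
      g₃ (y ⊗ₜ y') = y ⊗ₜ y' := by
    simp [g₃, hp y hy, hp y' hy']
  refine ⟨β, fun u u' => ?_, fun y hy y' hy' b => ?_, fun y hy y' hy' b => ?_⟩
  · rw [← hg₁', ← hg₂', h₁]
  · rw [← lTensor_comul_section hz hsec, ← hg₁', ← hg₃' hy hy',
      hmul (range_le_pbSub SA π hΔA g₃ hg₃ _) (range_le_pbSub SA π hΔA g₁ hg₁ _)
      (map₂_mul_mem_pbSub SA SB π hΔA hεA hπ g₃ hg₃ g₁ hg₁ _ _), hβ₁, hg₃' hy hy', hyy hy hy']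
  · rw [← lTensor_comul_section hz hsec, ← hg₁', ← hg₃' hy hy',
      hmul (range_le_pbSub SA π hΔA g₁ hg₁ _) (range_le_pbSub SA π hΔA g₃ hg₃ _)
      (map₂_mul_mem_pbSub SA SB π hΔA hεA hπ g₁ hg₁ g₃ hg₃ _ _), hβ₁, hg₃' hy hy', hyy hy hy']

end ProductFormula

section Main

variable {k : Type*} [Field k] {A B : Type*}
  [AddCommGroup A] [Module k A] [AddCommGroup B] [Module k B]
  [Coalgebra k A] [Coalgebra k B]
  {SA : DivBialg k A} {SB : DivBialg k B} {π : A →ₗ[k] B} {z : B →ₗ[k] A}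

/-- Multiplication of `B` followed by a morphism `B → A`, as a coalgebra morphism. -/
noncomputable def DivBialgHom.mulCoalgHom (hz : DivBialgHom k SB SA z) (hΔA : SA.Δ = comul)
    (hεA : SA.ε = counit) (hΔB : SB.Δ = comul) (hεB : SB.ε = counit) : B ⊗[k] B →ₗc[k] A :=
  (hz.coalgHom hΔB hεB hΔA hεA).comp (mulHom SB hΔB hεB)

lemma map_comul_mulCoalgHom (hz : DivBialgHom k SB SA z) (hΔA : SA.Δ = comul)
    (hεA : SA.ε = counit) (hΔB : SB.Δ = comul) (hεB : SB.ε = counit) :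
    conv (TensorProduct.mk k A A) (z ∘ₗ TensorProduct.lift SB.mul)
      (z ∘ₗ TensorProduct.lift SB.mul) =
    TensorProduct.map z z ∘ₗ SB.Δ ∘ₗ TensorProduct.lift SB.mul := by
  refine LinearMap.ext fun c => ?_
  have h := CoalgHomClass.map_comp_comul_apply (hz.mulCoalgHom hΔA hεA hΔB hεB) c
  rw [conv_apply, TensorProduct.lift_mk, LinearMap.id_apply]
  refine h.trans ?_
  rw [← hΔA]
  exact (hz.map_Δ _).symm

variable [IsCocomm k A] [IsCocomm k B]

/-- If a trilinear expression `act` in `x, a, a'` is a coalgebra morphism, then so is the map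
obtained by taking `x` in `F(A)` and `a = 0(b)`, `a' = 0(b')`. If the latter lies over the
multiplication of `B`, then dividing by `bb'` yields an element of `F(A)`. -/
lemma conv_mem_Fsub (hΔA : SA.Δ = comul) (hεA : SA.ε = counit)
    (hΔB : SB.Δ = comul) (hεB : SB.ε = counit)
    (hπ : DivBialgHom k SA SB π) (hz : DivBialgHom k SB SA z) (hsec : π ∘ₗ z = LinearMap.id)
    (act : A ⊗[k] (A ⊗[k] A) →ₗc[k] A)
    (hact : ∀ x b b', π x = counit (R := k) x • SB.one →
      π (act (x ⊗ₜ (z b ⊗ₜ z b'))) = counit (R := k) x • SB.mul b b')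
    (f : B ⊗[k] B →ₗ[k] A) {x : A} (hf : ∀ b b', f (b ⊗ₜ b') = act (x ⊗ₜ (z b ⊗ₜ z b')))
    (hx : x ∈ Fsub k SA SB.one π) (c : B ⊗[k] B) :
    conv SA.rd f (z ∘ₗ TensorProduct.lift SB.mul) c ∈ Fsub k SA SB.one π ∧
      conv SA.ld (z ∘ₗ TensorProduct.lift SB.mul) f c ∈ Fsub k SA SB.one π := by
  obtain ⟨p, hp, hπp⟩ := exists_coalgHom_Fsub hΔA hεA hΔB hεB hπ hz hsec
  let zH := hz.coalgHom hΔB hεB hΔA hεA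
  let ρ := act.comp (Coalgebra.TensorProduct.map p (Coalgebra.TensorProduct.map zH zH))
  have hρ (y b b') : ρ (y ⊗ₜ (b ⊗ₜ b')) = act (p y ⊗ₜ (z b ⊗ₜ z b')) := rfl
  have hfρ : f = (ρ : A ⊗[k] (B ⊗[k] B) →ₗ[k] A) ∘ₗ TensorProduct.mk k A (B ⊗[k] B) x := by
    ext b b'
    change f (b ⊗ₜ b') = act (p x ⊗ₜ (z b ⊗ₜ z b'))
    rw [hp x hx, hf]
  have h (y c) : π (ρ (y ⊗ₜ c)) = counit (R := k) y • π (hz.mulCoalgHom hΔA hεA hΔB hεB c) := by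
    induction c with
    | zero => simp
    | add _ _ h h' => simp_all [TensorProduct.tmul_add]
    | tmul b b' =>
      have h1 : counit (R := k) (p y) = counit (R := k) y := CoalgHomClass.counit_comp_apply p y
      have h2 : π (hz.mulCoalgHom hΔA hεA hΔB hεB (b ⊗ₜ b')) = SB.mul b b' :=
        congr($hsec (SB.mul b b'))
      rw [hρ, hact _ _ _ (h1 ▸ hπp y), h1, h2]
  rw [hfρ]
  exact ⟨conv_rd_mem_Fsub hΔA hεA hΔB hεB hπ ρ (hz.mulCoalgHom hΔA hεA hΔB hεB) h x c,
    conv_ld_mem_Fsub hΔA hεA hΔB hεB hπ ρ (hz.mulCoalgHom hΔA hεA hΔB hεB) h x c⟩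

/-- The product formula for elements `x·b` with `x ∈ F(A)` and `b ∈ B`. -/
lemma mul_mul_section (hΔA : SA.Δ = comul) (hεA : SA.ε = counit)
    (hΔB : SB.Δ = comul) (hεB : SB.ε = counit)
    (hπ : DivBialgHom k SA SB π) (hz : DivBialgHom k SB SA z) (hsec : π ∘ₗ z = LinearMap.id)
    (P : BoxPlusData k SA SB π z) {x x' : A} (hx : x ∈ Fsub k SA SB.one π)
    (hx' : x' ∈ Fsub k SA SB.one π) (b b' : B) :
    SA.mul (SA.mul x (z b)) (SA.mul x' (z b')) =
      conv SA.mul (conv SA.mul (rHat k SA SB.Δ z x) (sHat k SA SB.Δ z x'))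
        (z ∘ₗ TensorProduct.lift SB.mul) (b ⊗ₜ b') := by
  obtain ⟨β, hβ₁, hβ₂, -⟩ := exists_boxPlus_extension hΔA hεA hΔB hεB hπ hz hsec P
  let m := hz.mulCoalgHom hΔA hεA hΔB hεB
  have hm : (m : B ⊗[k] B →ₗ[k] A) = z ∘ₗ TensorProduct.lift SB.mul := rfl
  have hpz (b : B) : π (z b) = b := congr($hsec b)
  rw [rHat, sHat, hΔB, hatOf_sweedCoreR, hatOf_sweedCoreR, hz.lift_compl₁₂]
  set ρ := TensorProduct.lift ((((LinearMap.llcomp k A A A).compl₁₂ (SA.mul.flip ∘ₗ z)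
    (SA.mul.flip ∘ₗ z)).flip).compr₂ (LinearMap.applyₗ x)) with hρ
  set σ := TensorProduct.lift (((LinearMap.llcomp k A A A).compl₁₂ (SA.mul ∘ₗ z)
    (SA.mul.flip ∘ₗ z)).compr₂ (LinearMap.applyₗ x')) with hσ
  have hρ' (b b') : ρ (b ⊗ₜ b') = SA.mul (SA.mul x (z b)) (z b') := by simp [hρ]
  have hσ' (b b') : σ (b ⊗ₜ b') = SA.mul (z b) (SA.mul x' (z b')) := by simp [hσ]
  let act : A ⊗[k] (A ⊗[k] A) →ₗc[k] A :=
    (mulHom SA hΔA hεA).comp ((Coalgebra.TensorProduct.map (mulHom SA hΔA hεA)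
      (CoalgHom.id k A)).comp
      ((Coalgebra.TensorProduct.assoc k k A A A).symm : A ⊗[k] (A ⊗[k] A) →ₗc[k] _))
  have hR (c) := (conv_mem_Fsub hΔA hεA hΔB hεB hπ hz hsec act
    (fun x b b' h => by
      change π (SA.mul (SA.mul x (z b)) (z b')) = _
      simp [hπ.map_mul, hpz, h, SB.one_mul]) ρ hρ' hx c).1
  let act' : A ⊗[k] (A ⊗[k] A) →ₗc[k] A :=
    (mulHom SA hΔA hεA).comp ((Coalgebra.TensorProduct.map (CoalgHom.id k A)
      (mulHom SA hΔA hεA)).comp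
      ((Coalgebra.TensorProduct.assoc k k A A A : _ →ₗc[k] A ⊗[k] (A ⊗[k] A)).comp
      ((Coalgebra.TensorProduct.map (commHom k A A) (CoalgHom.id k A)).comp
      ((Coalgebra.TensorProduct.assoc k k A A A).symm : A ⊗[k] (A ⊗[k] A) →ₗc[k] _))))
  have hS (c) := (conv_mem_Fsub hΔA hεA hΔB hεB hπ hz hsec act'
    (fun x b b' h => by
      change π (SA.mul (z b) (SA.mul x (z b'))) = _
      simp [hπ.map_mul, hpz, h, SB.one_mul]) σ hσ' hx' c).1
  have hsplit : TensorProduct.map₂ SA.mul SA.mul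
      (LinearMap.lTensor A (z ∘ₗ π) (SA.Δ (SA.mul x (z b))))
      (LinearMap.rTensor A (z ∘ₗ π) (SA.Δ (SA.mul x' (z b')))) =
      conv (TensorProduct.mk k A A) ρ σ (b ⊗ₜ b') := by
    rw [SA.Δ_mul, SA.Δ_mul, lTensor_map₂_mul hz hπ, rTensor_map₂_mul hz hπ,
      lTensor_comul_of_mem_Fsub SA SB π z hz.map_one hx,
      rTensor_comul_of_mem_Fsub SA SB π z hz.map_one hx',
      lTensor_comul_section hz hsec, rTensor_comul_section hz hsec, hΔB, conv_apply,
      TensorProduct.comul_tmul]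
    induction comul (R := k) b with
    | zero => simp
    | add _ _ h h' => simp_all [TensorProduct.add_tmul]
    | tmul _ _ =>
      induction comul (R := k) b' with
      | zero => simp
      | add _ _ h h' => simp_all [TensorProduct.tmul_add]
      | tmul _ _ => simp [hρ', hσ', SA.one_mul]
  have hcancel (f : B ⊗[k] B →ₗ[k] A) :
      conv SA.mul (conv SA.rd f (m : B ⊗[k] B →ₗ[k] A)) (m : B ⊗[k] B →ₗ[k] A) = f :=
    conv_conv_cancel_right (hΔA ▸ hεA ▸ SA.mul_rd_cancel) f m
  rw [← hβ₁, hsplit]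
  conv_lhs => rw [← hcancel ρ, ← hcancel σ, ← conv_map₂_conv, hm,
    map_comul_mulCoalgHom hz hΔA hεA hΔB hεB, conv_apply]
  rw [conv_apply]
  induction comul (R := k) (b ⊗ₜ[k] b') with
  | zero => simp
  | add _ _ h h' => simp_all
  | tmul c d =>
    simp only [TensorProduct.map_tmul, TensorProduct.lift.tmul, conv_apply SA.mul,
      conv_apply (TensorProduct.mk k A A)]
    induction comul (R := k) c with
    | zero => simp
    | add _ _ h h' => simp_all
    | tmul c₁ c₂ => exact hβ₂ _ (hR c₁) _ (hS c₂) _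

/-- The product formula for elements `b·x` with `b ∈ B` and `x ∈ F(A)`. -/
lemma section_mul_mul (hΔA : SA.Δ = comul) (hεA : SA.ε = counit)
    (hΔB : SB.Δ = comul) (hεB : SB.ε = counit)
    (hπ : DivBialgHom k SA SB π) (hz : DivBialgHom k SB SA z) (hsec : π ∘ₗ z = LinearMap.id)
    (P : BoxPlusData k SA SB π z) {x x' : A} (hx : x ∈ Fsub k SA SB.one π)
    (hx' : x' ∈ Fsub k SA SB.one π) (b b' : B) :
    SA.mul (SA.mul (z b) x) (SA.mul (z b') x') =
      conv SA.mul (z ∘ₗ TensorProduct.lift SB.mul)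
        (conv SA.mul (sbarHat k SA SB.Δ z x) (lHat k SA SB.Δ z x')) (b ⊗ₜ b') := by
  obtain ⟨β, hβ₁, -, hβ₂⟩ := exists_boxPlus_extension hΔA hεA hΔB hεB hπ hz hsec P
  let m := hz.mulCoalgHom hΔA hεA hΔB hεB
  have hm : (m : B ⊗[k] B →ₗ[k] A) = z ∘ₗ TensorProduct.lift SB.mul := rfl
  have hpz (b : B) : π (z b) = b := congr($hsec b)
  rw [sbarHat, lHat, hΔB, hatOf_sweedCoreL, hatOf_sweedCoreL, hz.lift_compl₁₂]
  set ρ := TensorProduct.lift ((((LinearMap.llcomp k A A A).compl₁₂ (SA.mul.flip ∘ₗ z)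
    (SA.mul ∘ₗ z)).flip).compr₂ (LinearMap.applyₗ x)) with hρ
  set σ := TensorProduct.lift (((LinearMap.llcomp k A A A).compl₁₂ (SA.mul ∘ₗ z)
    (SA.mul ∘ₗ z)).compr₂ (LinearMap.applyₗ x')) with hσ
  have hρ' (b b') : ρ (b ⊗ₜ b') = SA.mul (SA.mul (z b) x) (z b') := by simp [hρ]
  have hσ' (b b') : σ (b ⊗ₜ b') = SA.mul (z b) (SA.mul (z b') x') := by simp [hσ]
  let act : A ⊗[k] (A ⊗[k] A) →ₗc[k] A :=
    (mulHom SA hΔA hεA).comp ((Coalgebra.TensorProduct.map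
      ((mulHom SA hΔA hεA).comp (commHom k A A)) (CoalgHom.id k A)).comp
      ((Coalgebra.TensorProduct.assoc k k A A A).symm : A ⊗[k] (A ⊗[k] A) →ₗc[k] _))
  have hR (c) := (conv_mem_Fsub hΔA hεA hΔB hεB hπ hz hsec act
    (fun x b b' h => by
      change π (SA.mul (SA.mul (z b) x) (z b')) = _
      simp [hπ.map_mul, hpz, h, SB.mul_one]) ρ hρ' hx c).2
  let act' : A ⊗[k] (A ⊗[k] A) →ₗc[k] A :=
    (mulHom SA hΔA hεA).comp ((Coalgebra.TensorProduct.map (CoalgHom.id k A)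
      (mulHom SA hΔA hεA)).comp
      ((Coalgebra.TensorProduct.assoc k k A A A : _ →ₗc[k] A ⊗[k] (A ⊗[k] A)).comp
      (commHom k A (A ⊗[k] A))))
  have hS (c) := (conv_mem_Fsub hΔA hεA hΔB hεB hπ hz hsec act'
    (fun x b b' h => by
      change π (SA.mul (z b) (SA.mul (z b') x)) = _
      simp [hπ.map_mul, hpz, h, SB.mul_one]) σ hσ' hx' c).2
  have hsplit : TensorProduct.map₂ SA.mul SA.mul
      (LinearMap.lTensor A (z ∘ₗ π) (SA.Δ (SA.mul (z b) x)))
      (LinearMap.rTensor A (z ∘ₗ π) (SA.Δ (SA.mul (z b') x'))) =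
      conv (TensorProduct.mk k A A) ρ σ (b ⊗ₜ b') := by
    rw [SA.Δ_mul, SA.Δ_mul, lTensor_map₂_mul hz hπ, rTensor_map₂_mul hz hπ,
      lTensor_comul_of_mem_Fsub SA SB π z hz.map_one hx,
      rTensor_comul_of_mem_Fsub SA SB π z hz.map_one hx',
      lTensor_comul_section hz hsec, rTensor_comul_section hz hsec, hΔB, conv_apply,
      TensorProduct.comul_tmul]
    induction comul (R := k) b with
    | zero => simp
    | add _ _ h h' => simp_all [TensorProduct.add_tmul]
    | tmul _ _ =>
      induction comul (R := k) b' with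
      | zero => simp
      | add _ _ h h' => simp_all [TensorProduct.tmul_add]
      | tmul _ _ => simp [hρ', hσ', SA.mul_one]
  have hcancel (f : B ⊗[k] B →ₗ[k] A) :
      conv SA.mul (m : B ⊗[k] B →ₗ[k] A) (conv SA.ld (m : B ⊗[k] B →ₗ[k] A) f) = f :=
    conv_conv_cancel_left (hΔA ▸ hεA ▸ SA.mul_ld_cancel) f m
  rw [← hβ₁, hsplit]
  conv_lhs => rw [← hcancel ρ, ← hcancel σ, ← conv_map₂_conv, hm,
    map_comul_mulCoalgHom hz hΔA hεA hΔB hεB, conv_apply]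
  rw [conv_apply]
  induction comul (R := k) (b ⊗ₜ[k] b') with
  | zero => simp
  | add _ _ h h' => simp_all
  | tmul c d =>
    simp only [TensorProduct.map_tmul, TensorProduct.lift.tmul, conv_apply SA.mul,
      conv_apply (TensorProduct.mk k A A)]
    induction comul (R := k) d with
    | zero => simp
    | add _ _ h h' => simp_all
    | tmul d₁ d₂ => exact hβ₂ _ (hR d₁) _ (hS d₂) _

end Main

end FormalLoops

open FormalLoops in
/-- for `x, x' ∈ F(A)` and `b, b' ∈ B`,
`(x·b)·(x'·b') = Σ (r(b₍₁₎,b'₍₁₎)x · s(b₍₂₎,b'₍₂₎)x') · (b₍₃₎b'₍₃₎)` and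
`(b·x)·(b'·x') = Σ (b₍₁₎b'₍₁₎) · (s̄(b₍₂₎,b'₍₂₎)x · l(b₍₃₎,b'₍₃₎)x')`. -/
theorem fsub_product_formula
    (k : Type*) [Field k] [CharZero k]
    {A B : Type*} [AddCommGroup A] [Module k A] [AddCommGroup B] [Module k B]
    (SA : DivBialg k A) (SB : DivBialg k B)
    (π : A →ₗ[k] B) (z : B →ₗ[k] A)
    (hπ : DivBialgHom k SA SB π) (hz : DivBialgHom k SB SA z)
    (hsec : π ∘ₗ z = LinearMap.id)
    (P : BoxPlusData k SA SB π z)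
    (F : Submodule k A) (hF : F = Fsub k SA SB.one π) :
    ∀ x ∈ F, ∀ x' ∈ F, ∀ b b' : B,
      (SA.mul (SA.mul x (z b)) (SA.mul x' (z b'))
        = (TensorProduct.lift SA.mul ∘ₗ
            LinearMap.rTensor A (TensorProduct.lift SA.mul) ∘ₗ
            (TensorProduct.assoc k A A A).symm.toLinearMap ∘ₗ
            TensorProduct.map (rHat k SA SB.Δ z x)
              (TensorProduct.map (sHat k SA SB.Δ z x') (z ∘ₗ TensorProduct.lift SB.mul)) ∘ₗ
            LinearMap.lTensor (B ⊗[k] B)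
              (TensorProduct.tensorTensorTensorComm k B B B B).toLinearMap ∘ₗ
            (TensorProduct.tensorTensorTensorComm k B (B ⊗[k] B) B (B ⊗[k] B)).toLinearMap)
          (comul2 k SB.Δ b ⊗ₜ[k] comul2 k SB.Δ b')) ∧
      (SA.mul (SA.mul (z b) x) (SA.mul (z b') x')
        = (TensorProduct.lift SA.mul ∘ₗ
            LinearMap.lTensor A (TensorProduct.lift SA.mul) ∘ₗ
            TensorProduct.map (z ∘ₗ TensorProduct.lift SB.mul)
              (TensorProduct.map (sbarHat k SA SB.Δ z x) (lHat k SA SB.Δ z x')) ∘ₗ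
            LinearMap.lTensor (B ⊗[k] B)
              (TensorProduct.tensorTensorTensorComm k B B B B).toLinearMap ∘ₗ
            (TensorProduct.tensorTensorTensorComm k B (B ⊗[k] B) B (B ⊗[k] B)).toLinearMap)
          (comul2 k SB.Δ b ⊗ₜ[k] comul2 k SB.Δ b')) := by
  let _ := SA.coalgebra
  let _ := SB.coalgebra
  have _ := SA.isCocomm
  have _ := SB.isCocomm
  intro x hx x' hx' b b'
  rw [hF] at hx hx'
  refine ⟨(mul_mul_section rfl rfl rfl rfl hπ hz hsec P hx hx' b b').trans ?_,
    (section_mul_mul rfl rfl rfl rfl hπ hz hsec P hx hx' b b').trans ?_⟩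
  · rw [← comul2_left, ← comul2_tmul]
    rfl
  · rw [← comul2_right, ← comul2_tmul]
    rfl
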